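/- arXiv:2102.10318 — 2 statements merged into one kernel-verified Lean document; each statement's English description precedes it below -/
import Mathlib

section
/- Let Y be a Banach space, A, B bounded linear operators on Y, 1 < α < 2, 0 < β < 1, and η, η̂ ∈ Y. Define x(t) = η + ( ∑_{k=0}^∞ ∑_{m=0}^∞ Q_{k,m}^{A,B} B · t^{k(α−β)+mα+α} / Γ(k(α−β)+mα+α+1) ) η + ( ∑_{k=0}^∞ ∑_{m=0}^∞ Q_{k,m}^{A,B} · t^{k(α−β)+mα+1} / Γ(k(α−β)+mα+2) ) η̂ for t ≥ 0. Then x(0) = η, x is differentiable with x′(0) = η̂, the Caputo fractional derivatives (ᶜD^{α}x)(t) and (ᶜD^{β}x)(t) exist for every t > 0, and x satisfies (ᶜD^{α}x)(t) − A(ᶜD^{β}x)(t) = B x(t) for all t > 0. -/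
open MeasureTheory

/-- The operators `Q_{k,m}^{A,B}` from the paper: `Q k 0 = A^k`, `Q 0 m = B^m`, and
`Q k m = ∑_{l=0}^{k} A^{k-l} B Q l (m-1)` for `m ≥ 1`. -/
noncomputable def Q {𝔸 : Type*} [Ring 𝔸] (A B : 𝔸) : ℕ → ℕ → 𝔸
  | k, 0 => A ^ k
  | k, m + 1 => ∑ l ∈ Finset.range (k + 1), A ^ (k - l) * B * Q A B l m

lemma Q_zero_succ {𝔸 : Type*} [Ring 𝔸] (A B : 𝔸) (m : ℕ) :
    Q A B 0 (m + 1) = B * Q A B 0 m := by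
  simp [Q]

lemma Q_succ_zero {𝔸 : Type*} [Ring 𝔸] (A B : 𝔸) (k : ℕ) :
    Q A B (k + 1) 0 = A * Q A B k 0 := by
  simp [Q, pow_succ']

lemma Q_succ_succ {𝔸 : Type*} [Ring 𝔸] (A B : 𝔸) (k m : ℕ) :
    Q A B (k + 1) (m + 1) = A * Q A B k (m + 1) + B * Q A B (k + 1) m := by
  rw [Q, Finset.sum_range_succ, Q, Finset.mul_sum]
  congr 1
  · refine Finset.sum_congr rfl fun l hl => ?_
    have : k + 1 - l = (k - l) + 1 := by
      have := Finset.mem_range.1 hl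
      omega
    rw [this, pow_succ']
    simp only [mul_assoc]
  · simp

lemma Q_norm {Y : Type*} [NormedAddCommGroup Y] [NormedSpace ℝ Y] (A B : Y →L[ℝ] Y) (k m : ℕ) :
    ‖Q A B k m‖ ≤ (‖A‖ + ‖B‖) ^ (k + m) := by
  have hA := norm_nonneg A
  have hB := norm_nonneg B
  induction m generalizing k with
  | zero =>
    induction k with
    | zero => simpa [Q] using! ContinuousLinearMap.norm_id_le (𝕜 := ℝ) (E := Y)
    | succ k ih =>
      rw [Q_succ_zero]
      refine (norm_mul_le _ _).trans ?_
      rw [show k + 1 + 0 = (k + 0) + 1 by ring, pow_succ']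
      exact mul_le_mul (by linarith) ih (norm_nonneg _) (by positivity)
  | succ m ihm =>
    induction k with
    | zero =>
      rw [Q_zero_succ]
      refine (norm_mul_le _ _).trans ?_
      rw [show 0 + (m + 1) = (0 + m) + 1 by ring, pow_succ']
      gcongr
      · linarith
      · exact ihm 0
    | succ k ih =>
      rw [Q_succ_succ]
      refine (norm_add_le _ _).trans ?_
      rw [show k + 1 + (m + 1) = (k + 1 + m) + 1 by ring, pow_succ', add_mul]
      refine add_le_add ((norm_mul_le _ _).trans ?_) ((norm_mul_le _ _).trans ?_)
      · gcongr
        rw [show k + 1 + m = k + (m + 1) by ring]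
        exact ih
      · gcongr
        exact ihm _

lemma Gamma_add_one_lower {R x : ℝ} (hR : 0 < R) (hx : 0 < x) :
    R ^ x * Real.exp (-R) ≤ Real.Gamma (x + 1) := by
  rw [Real.Gamma_eq_integral (by linarith), ← integral_exp_neg_Ioi, ← integral_const_mul]
  have hc := Real.GammaIntegral_convergent (s := x + 1) (by linarith)
  have hsub : Set.Ioi R ⊆ Set.Ioi 0 := Set.Ioi_subset_Ioi hR.le
  refine le_trans (setIntegral_mono_on ?_ (hc.mono_set hsub) measurableSet_Ioi ?_)
    (setIntegral_mono_set hc ?_ (Filter.Eventually.of_forall hsub))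
  · exact (integrableOn_exp_neg_Ioi R).const_mul _
  · intro s hs
    have hs' : R < s := hs
    rw [mul_comm, add_sub_cancel_right]
    gcongr
  · refine (ae_restrict_iff' measurableSet_Ioi).2 (Filter.Eventually.of_forall fun s hs => ?_)
    have hs' : 0 < s := hs
    simp only [Pi.zero_apply]
    positivity

lemma Gamma_lower {R : ℝ} (hR : 0 < R) :
    ∃ K : ℝ, 0 < K ∧ ∀ x : ℝ, 0 < x → (Real.Gamma x)⁻¹ ≤ K * R ^ (-x) := by
  refine ⟨Real.exp (Real.exp 1 * R), Real.exp_pos _, fun x hx => ?_⟩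
  have h := Gamma_add_one_lower (R := Real.exp 1 * R) (by positivity) hx
  rw [Real.Gamma_add_one hx.ne', Real.mul_rpow (by positivity) hR.le, Real.exp_one_rpow,
    Real.exp_neg] at h
  have hG := Real.Gamma_pos_of_pos hx
  have hxe : x ≤ Real.exp x := by linarith [Real.add_one_le_exp x]
  have hRx : 0 < R ^ x := by positivity
  have h2 : R ^ x * (Real.exp (Real.exp 1 * R))⁻¹ ≤ Real.Gamma x := by
    have h3 : Real.exp x * (R ^ x * (Real.exp (Real.exp 1 * R))⁻¹) ≤ Real.exp x * Real.Gamma x := by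
      calc _ = Real.exp x * R ^ x * (Real.exp (Real.exp 1 * R))⁻¹ := by ring
        _ ≤ x * Real.Gamma x := h
        _ ≤ _ := by gcongr
    exact le_of_mul_le_mul_left h3 (Real.exp_pos x)
  calc (Real.Gamma x)⁻¹ ≤ (R ^ x * (Real.exp (Real.exp 1 * R))⁻¹)⁻¹ := by gcongr
    _ = _ := by rw [Real.rpow_neg hR.le, mul_inv, inv_inv, mul_comm]

lemma frac_int_real {ρ μ τ : ℝ} (hρ : 0 < ρ) (hμ : -1 < μ) (hτ : 0 < τ) :
    ∫ s in (0:ℝ)..τ, (τ - s) ^ (ρ - 1) * (s ^ μ / Real.Gamma (μ + 1)) =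
      Real.Gamma ρ * (τ ^ (μ + ρ) / Real.Gamma (μ + ρ + 1)) := by
  have h1 := Complex.betaIntegral_scaled ((μ + 1 : ℝ) : ℂ) (ρ : ℂ) hτ
  rw [Complex.betaIntegral_eq_Gamma_mul_div _ _ (by simpa using by linarith) (by simpa)] at h1
  have h2 : ∫ s in (0:ℝ)..τ, (s : ℂ) ^ (((μ + 1 : ℝ) : ℂ) - 1) * ((τ : ℂ) - s) ^ ((ρ : ℂ) - 1)
      = ((∫ s in (0:ℝ)..τ, s ^ μ * (τ - s) ^ (ρ - 1) : ℝ) : ℂ) := by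
    rw [← intervalIntegral.integral_ofReal]
    refine intervalIntegral.integral_congr fun s hs => ?_
    rw [Set.uIcc_of_le hτ.le] at hs
    have e1 : (((μ + 1 : ℝ) : ℂ) - 1) = (μ : ℂ) := by push_cast; ring
    simp only [e1]
    rw [Complex.ofReal_mul, Complex.ofReal_cpow hs.1, Complex.ofReal_cpow (by linarith [hs.2])]
    push_cast
    rfl
  rw [h2, ← Complex.ofReal_add, Complex.Gamma_ofReal, Complex.Gamma_ofReal, Complex.Gamma_ofReal,
    ← Complex.ofReal_one, ← Complex.ofReal_sub, ← Complex.ofReal_cpow hτ.le] at h1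
  norm_cast at h1
  have hG : Real.Gamma (μ + 1) ≠ 0 := (Real.Gamma_pos_of_pos (by linarith)).ne'
  calc _ = ∫ s in (0:ℝ)..τ, (Real.Gamma (μ + 1))⁻¹ * (s ^ μ * (τ - s) ^ (ρ - 1)) := by
        congr 1; ext s; ring
    _ = _ := by
      rw [intervalIntegral.integral_const_mul, h1, show μ + 1 + ρ - 1 = μ + ρ by ring,
        show μ + 1 + ρ = μ + ρ + 1 by ring]
      field_simp

/-- exponents -/
noncomputable def ee (α β : ℝ) (p : ℕ × ℕ) : ℝ := (p.1 : ℝ) * (α - β) + (p.2 : ℝ) * α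

/-- terms of the series -/
noncomputable def W {Y : Type*} [NormedAddCommGroup Y] [NormedSpace ℝ Y] (A B : Y →L[ℝ] Y)
    (α β c : ℝ) (v : Y) (p : ℕ × ℕ) (t : ℝ) : Y :=
  (t ^ (ee α β p + c) / Real.Gamma (ee α β p + c + 1)) • Q A B p.1 p.2 v

/-- the series -/
noncomputable def E {Y : Type*} [NormedAddCommGroup Y] [NormedSpace ℝ Y] (A B : Y →L[ℝ] Y)
    (α β c : ℝ) (v : Y) (t : ℝ) : Y := ∑' p : ℕ × ℕ, W A B α β c v p t

lemma ee_ge {α β : ℝ} (hβ0 : 0 < β) (p : ℕ × ℕ) :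
    (α - β) * ((p.1 + p.2 : ℕ) : ℝ) ≤ ee α β p := by
  unfold ee
  push_cast
  have : (0:ℝ) ≤ p.2 := Nat.cast_nonneg _
  nlinarith

lemma ee_nonneg {α β : ℝ} (hβ0 : 0 < β) (hγ : β < α) (p : ℕ × ℕ) : 0 ≤ ee α β p :=
  le_trans (mul_nonneg (by linarith) (Nat.cast_nonneg _)) (ee_ge hβ0 p)

/-- geometric majorant -/
noncomputable def geo (p : ℕ × ℕ) : ℝ := (1 / 2 : ℝ) ^ p.1 * (1 / 2 : ℝ) ^ p.2

lemma geo_summable : Summable geo := by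
  have h : Summable fun n : ℕ => (1 / 2 : ℝ) ^ n := summable_geometric_two
  exact h.mul_of_nonneg h (fun _ => by positivity) (fun _ => by positivity)

lemma W_bound {Y : Type*} [NormedAddCommGroup Y] [NormedSpace ℝ Y] (A B : Y →L[ℝ] Y)
    {α β c : ℝ} (hβ0 : 0 < β) (hγ : β < α) (hc : -1 < c) (v : Y) {T : ℝ} (hT : 0 < T) :
    ∃ K : ℝ, 0 ≤ K ∧ ∀ t, 0 ≤ t → t ≤ T → (0 < t ∨ 0 ≤ c) → ∀ p : ℕ × ℕ,
      ‖W A B α β c v p t‖ ≤ K * t ^ c * geo p := by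
  set C : ℝ := ‖A‖ + ‖B‖ + 1 with hC
  have hCpos : 0 < C := by positivity
  have hC1 : 1 ≤ C := by have := norm_nonneg A; have := norm_nonneg B; linarith
  have hg : 0 < α - β := by linarith
  -- choose the radius
  set q : ℝ := (2 * C) ^ (-(α - β)⁻¹) with hq
  have hqpos : 0 < q := by positivity
  have hq1 : q ≤ 1 := Real.rpow_le_one_of_one_le_of_nonpos (by linarith)
    (by simp only [Left.neg_nonpos_iff]; positivity)
  have hqg : q ^ (α - β) = (2 * C)⁻¹ := by
    rw [hq, ← Real.rpow_mul (by positivity), neg_mul, inv_mul_cancel₀ hg.ne', Real.rpow_neg_one]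
  set R : ℝ := T / q with hR
  have hRpos : 0 < R := by positivity
  obtain ⟨K, hK, hKb⟩ := Gamma_lower hRpos
  refine ⟨K * R ^ (-(c + 1)) * ‖v‖, by positivity, fun t ht0 htT htc p => ?_⟩
  have he := ee_nonneg hβ0 hγ p
  have h1 : (Real.Gamma (ee α β p + c + 1))⁻¹ ≤ K * (R ^ (-(c + 1)) * R ^ (-(ee α β p))) := by
    rw [← Real.rpow_add hRpos]
    refine (hKb _ (by linarith)).trans (le_of_eq ?_)
    congr 2; ring
  have h2 : t ^ (ee α β p + c) = t ^ (ee α β p) * t ^ c := by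
    rcases htc with h | h
    · exact Real.rpow_add h _ _
    · exact Real.rpow_add_of_nonneg ht0 he h
  have h3 : t ^ (ee α β p) * R ^ (-(ee α β p)) ≤ (2 * C)⁻¹ ^ (p.1 + p.2) := by
    have : R ^ (-(ee α β p)) = (R⁻¹) ^ (ee α β p) := by
      rw [Real.rpow_neg hRpos.le, Real.inv_rpow hRpos.le]
    rw [this, ← Real.mul_rpow ht0 (by positivity)]
    calc (t * R⁻¹) ^ ee α β p ≤ q ^ ee α β p := by
          gcongr
          rw [hR, inv_div, mul_div_assoc', div_le_iff₀ hT]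
          nlinarith
      _ ≤ q ^ ((α - β) * ((p.1 + p.2 : ℕ) : ℝ)) :=
          Real.rpow_le_rpow_of_exponent_ge hqpos hq1 (ee_ge hβ0 p)
      _ = _ := by rw [Real.rpow_mul hqpos.le, hqg, Real.rpow_natCast]
  have h4 : ‖Q A B p.1 p.2 v‖ ≤ C ^ (p.1 + p.2) * ‖v‖ := by
    refine (ContinuousLinearMap.le_opNorm _ _).trans ?_
    gcongr
    refine (Q_norm A B _ _).trans ?_
    gcongr
    linarith
  have hGp : 0 < Real.Gamma (ee α β p + c + 1) := Real.Gamma_pos_of_pos (by linarith)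
  have htc' : 0 ≤ t ^ c := Real.rpow_nonneg ht0 _
  have hte : 0 ≤ t ^ ee α β p := Real.rpow_nonneg ht0 _
  rw [W, norm_smul, Real.norm_of_nonneg (by rw [h2]; positivity), h2, div_eq_mul_inv]
  calc t ^ ee α β p * t ^ c * (Real.Gamma (ee α β p + c + 1))⁻¹ * ‖Q A B p.1 p.2 v‖
      ≤ t ^ ee α β p * t ^ c * (K * (R ^ (-(c + 1)) * R ^ (-(ee α β p)))) *
          (C ^ (p.1 + p.2) * ‖v‖) := by gcongr
    _ = (K * R ^ (-(c + 1)) * ‖v‖ * t ^ c * C ^ (p.1 + p.2)) *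
          (t ^ ee α β p * R ^ (-(ee α β p))) := by ring
    _ ≤ (K * R ^ (-(c + 1)) * ‖v‖ * t ^ c * C ^ (p.1 + p.2)) * (2 * C)⁻¹ ^ (p.1 + p.2) := by
          gcongr
    _ = K * R ^ (-(c + 1)) * ‖v‖ * t ^ c * (C * (2 * C)⁻¹) ^ (p.1 + p.2) := by
          rw [mul_pow]; ring
    _ = _ := by
          rw [show C * (2 * C)⁻¹ = 1 / 2 by field_simp, geo, pow_add]

section series
variable {Y : Type*} [NormedAddCommGroup Y] [NormedSpace ℝ Y] [CompleteSpace Y]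
  (A B : Y →L[ℝ] Y) {α β c : ℝ}

lemma W_summable (hβ0 : 0 < β) (hγ : β < α) (hc : -1 < c) (v : Y) {t : ℝ} (ht : 0 ≤ t)
    (htc : 0 < t ∨ 0 ≤ c) : Summable fun p => W A B α β c v p t := by
  obtain ⟨K, hK, h⟩ := W_bound A B hβ0 hγ hc v (T := t + 1) (by linarith)
  exact Summable.of_norm_bounded (geo_summable.mul_left _) (h t ht (by linarith) htc)

lemma E_bound (hβ0 : 0 < β) (hγ : β < α) (hc : -1 < c) (v : Y) :
    ∃ K : ℝ, 0 ≤ K ∧ ∀ t, 0 < t → t ≤ 1 → ‖E A B α β c v t‖ ≤ K * t ^ c := by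
  obtain ⟨K, hK, h⟩ := W_bound A B hβ0 hγ hc v (T := 1) one_pos
  refine ⟨K * ∑' p, geo p, mul_nonneg hK (tsum_nonneg fun p => by unfold geo; positivity),
    fun t ht0 ht1 => ?_⟩
  have := tsum_of_norm_bounded ((geo_summable.mul_left (K * t ^ c)).hasSum)
    (h t ht0.le ht1 (Or.inl ht0))
  rw [tsum_mul_left] at this
  unfold E
  linarith

lemma E_rec (hβ0 : 0 < β) (hγ : β < α) (hc : -1 < c) (v : Y) {t : ℝ} (ht : 0 < t) :
    E A B α β c v t = (t ^ c / Real.Gamma (c + 1)) • v + A (E A B α β (c + (α - β)) v t)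
      + B (E A B α β (c + α) v t) := by
  have s1 := (W_summable A B hβ0 hγ (c := c + (α - β)) (by linarith) v ht.le
    (Or.inl ht)).hasSum.mapL A
  have s2 := (W_summable A B hβ0 hγ (c := c + α) (by linarith) v ht.le
    (Or.inl ht)).hasSum.mapL B
  let f1 : ℕ × ℕ → Y := fun p => match p with
    | (0, _) => 0
    | (k + 1, m) => A (W A B α β (c + (α - β)) v (k, m) t)
  let f2 : ℕ × ℕ → Y := fun p => match p with
    | (_, 0) => 0
    | (k, m + 1) => B (W A B α β (c + α) v (k, m) t)
  let f0 : ℕ × ℕ → Y := fun p => if p = (0, 0) then (t ^ c / Real.Gamma (c + 1)) • v else 0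
  have i1 : Function.Injective (fun p : ℕ × ℕ => (p.1 + 1, p.2)) := by
    rintro ⟨a, b⟩ ⟨a', b'⟩ h
    simpa using h
  have i2 : Function.Injective (fun p : ℕ × ℕ => (p.1, p.2 + 1)) := by
    rintro ⟨a, b⟩ ⟨a', b'⟩ h
    simpa using h
  have h1 : HasSum f1 (A (E A B α β (c + (α - β)) v t)) := by
    refine (i1.hasSum_iff ?_).1 s1
    rintro ⟨_ | k, m⟩ hp
    · rfl
    · exact absurd ⟨(k, m), rfl⟩ hp
  have h2 : HasSum f2 (B (E A B α β (c + α) v t)) := by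
    refine (i2.hasSum_iff ?_).1 s2
    rintro ⟨k, _ | m⟩ hp
    · rfl
    · exact absurd ⟨(k, m), rfl⟩ hp
  have h0 : HasSum f0 ((t ^ c / Real.Gamma (c + 1)) • v) := hasSum_ite_eq _ _
  have hs := (h0.add h1).add h2
  refine HasSum.tsum_eq ?_
  convert hs using 1
  ext ⟨k, m⟩
  rcases k with _ | k <;> rcases m with _ | m
  · simp [f0, f1, f2, W, ee, Q]
  · simp only [f0, f1, f2, W, Q_zero_succ, map_smul]
    simp only [ee, mul_apply_eq_comp]
    push_cast
    simp
    ring_nf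
  · simp only [f0, f1, f2, W, Q_succ_zero, map_smul]
    simp only [ee, mul_apply_eq_comp]
    push_cast
    simp
    ring_nf
  · simp only [f0, f1, f2, W, Q_succ_succ, map_smul]
    have e1 : ee α β (k, m + 1) + (c + (α - β)) = ee α β (k + 1, m + 1) + c := by
      simp only [ee]; push_cast; ring
    have e2 : ee α β (k + 1, m) + (c + α) = ee α β (k + 1, m + 1) + c := by
      simp only [ee]; push_cast; ring
    rw [e1, e2]
    simp

lemma E_cont (hβ0 : 0 < β) (hγ : β < α) (hc : 0 ≤ c) (v : Y) {T : ℝ} (hT : 0 < T) :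
    ContinuousOn (E A B α β c v) (Set.Icc 0 T) := by
  obtain ⟨K, hK, h⟩ := W_bound A B hβ0 hγ (by linarith) v hT (c := c)
  refine continuousOn_tsum (u := fun p => K * T ^ c * geo p) (fun p => ?_)
    (geo_summable.mul_left _) ?_
  · have he := ee_nonneg hβ0 hγ p
    unfold W
    refine ContinuousOn.smul (ContinuousOn.div_const ?_ _) continuousOn_const
    exact (Real.continuous_rpow_const (by linarith)).continuousOn
  · intro p t ht
    refine (h t ht.1 ht.2 (Or.inr hc) p).trans ?_
    have h1 : t ^ c ≤ T ^ c := Real.rpow_le_rpow ht.1 ht.2 hc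
    have h2 : 0 ≤ geo p := by unfold geo; positivity
    gcongr

lemma E_deriv (hβ0 : 0 < β) (hγ : β < α) (hc : 0 < c) (v : Y) {t : ℝ} (ht : 0 < t) :
    HasDerivAt (E A B α β c v) (E A B α β (c - 1) v t) t := by
  obtain ⟨K, hK, h⟩ := W_bound A B hβ0 hγ (by linarith) v (T := 2 * t) (c := c - 1) (by linarith)
  obtain ⟨M, hM⟩ : ∃ M, ∀ s ∈ Set.Icc (t / 2) (2 * t), s ^ (c - 1) ≤ M := by
    have : ContinuousOn (fun s : ℝ => s ^ (c - 1)) (Set.Icc (t / 2) (2 * t)) := by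
      refine continuousOn_id.rpow_const fun s hs => Or.inl ?_
      have := hs.1
      simp only [id]
      linarith
    obtain ⟨M, hM⟩ := isCompact_Icc.bddAbove_image this
    exact ⟨M, fun s hs => hM ⟨s, hs, rfl⟩⟩
  refine hasDerivAt_tsum_of_isPreconnected (u := fun p => K * M * geo p)
    (t := Set.Ioo (t / 2) (2 * t)) (y₀ := t)
    (geo_summable.mul_left _) isOpen_Ioo isPreconnected_Ioo ?_ ?_ ⟨by linarith, by linarith⟩
    (W_summable A B hβ0 hγ (by linarith) v ht.le (Or.inl ht)) ⟨by linarith, by linarith⟩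
  · intro p s hs
    have hs0 : 0 < s := by linarith [hs.1]
    have he := ee_nonneg hβ0 hγ p
    unfold W
    refine HasDerivAt.smul_const ?_ _
    have h1 := (Real.hasDerivAt_rpow_const (x := s) (p := ee α β p + c)
      (Or.inl hs0.ne')).div_const (Real.Gamma (ee α β p + c + 1))
    convert h1 using 1
    have hne : ee α β p + c ≠ 0 := by linarith
    rw [Real.Gamma_add_one hne, mul_div_mul_left _ _ hne]
    congr 2 <;> ring
  · intro p s hs
    have hs0 : 0 < s := by linarith [hs.1]
    refine (h s hs0.le hs.2.le (Or.inl hs0) p).trans ?_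
    have h1 := hM s ⟨hs.1.le, hs.2.le⟩
    have h2 : 0 ≤ geo p := by unfold geo; positivity
    gcongr

lemma kernel_int {ρ τ : ℝ} (hρ : 0 < ρ) :
    IntervalIntegrable (fun s : ℝ => (τ - s) ^ (ρ - 1)) volume 0 τ := by
  have := (intervalIntegral.intervalIntegrable_rpow' (a := 0) (b := τ) (r := ρ - 1)
    (by linarith)).comp_sub_left τ
  simpa using this.symm

lemma kernel_smul_int {ρ τ : ℝ} (hρ : 0 < ρ) (hτ : 0 < τ) {f : ℝ → Y}
    (hf : ContinuousOn f (Set.Icc 0 τ)) :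
    IntervalIntegrable (fun s : ℝ => (τ - s) ^ (ρ - 1) • f s) volume 0 τ := by
  refine (kernel_int hρ).smul_continuousOn ?_
  rwa [Set.uIcc_of_le hτ.le]

lemma E_int (hβ0 : 0 < β) (hγ : β < α) (hc : 0 ≤ c) (v : Y) {ρ τ : ℝ} (hρ : 0 < ρ)
    (hτ : 0 < τ) :
    ∫ s in (0:ℝ)..τ, (τ - s) ^ (ρ - 1) • E A B α β c v s =
      Real.Gamma ρ • E A B α β (c + ρ) v τ := by
  obtain ⟨K, hK, h⟩ := W_bound A B hβ0 hγ (by linarith) v hτ (c := c)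
  have hWc : ∀ p, ContinuousOn (fun s => W A B α β c v p s) (Set.Icc 0 τ) := by
    intro p
    have he := ee_nonneg hβ0 hγ p
    unfold W
    refine ContinuousOn.smul (ContinuousOn.div_const ?_ _) continuousOn_const
    exact (Real.continuous_rpow_const (by linarith)).continuousOn
  have key := intervalIntegral.hasSum_integral_of_dominated_convergence (μ := volume)
    (a := 0) (b := τ) (F := fun p s => (τ - s) ^ (ρ - 1) • W A B α β c v p s)
    (f := fun s => (τ - s) ^ (ρ - 1) • E A B α β c v s)
    (fun p s => (τ - s) ^ (ρ - 1) * (K * τ ^ c) * geo p) ?_ ?_ ?_ ?_ ?_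
  · rw [← key.tsum_eq, E, ← tsum_const_smul'']
    refine tsum_congr fun p => ?_
    have he := ee_nonneg hβ0 hγ p
    have hr := frac_int_real (ρ := ρ) (μ := ee α β p + c) (τ := τ) hρ (by linarith) hτ
    unfold W
    simp only [smul_smul]
    rw [intervalIntegral.integral_smul_const, hr, add_assoc (ee α β p) c ρ]
  · intro p
    have := (kernel_smul_int hρ hτ (hWc p)).aestronglyMeasurable
    rwa [Set.uIoc_of_le hτ.le]
  · intro p
    refine Filter.Eventually.of_forall fun s hs => ?_
    rw [Set.uIoc_of_le hτ.le] at hs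
    have hk : 0 ≤ (τ - s) ^ (ρ - 1) := Real.rpow_nonneg (by linarith [hs.2]) _
    rw [norm_smul, Real.norm_of_nonneg hk, mul_assoc]
    refine mul_le_mul_of_nonneg_left ((h s hs.1.le hs.2 (Or.inr hc) p).trans ?_) hk
    have h1 : s ^ c ≤ τ ^ c := Real.rpow_le_rpow hs.1.le hs.2 hc
    have h2 : 0 ≤ geo p := by unfold geo; positivity
    gcongr
  · exact Filter.Eventually.of_forall fun s hs => geo_summable.mul_left _
  · simp_rw [tsum_mul_left]
    exact ((kernel_int hρ).mul_const _).mul_const _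
  · refine Filter.Eventually.of_forall fun s hs => ?_
    rw [Set.uIoc_of_le hτ.le] at hs
    exact (W_summable A B hβ0 hγ (by linarith) v hs.1.le (Or.inl hs.1)).hasSum.const_smul _

end series

lemma E_zero {Y : Type*} [NormedAddCommGroup Y] [NormedSpace ℝ Y] (A B : Y →L[ℝ] Y)
    {α β c : ℝ} (hβ0 : 0 < β) (hγ : β < α) (hc : 0 < c) (v : Y) : E A B α β c v 0 = 0 := by
  unfold E W
  refine (tsum_congr fun p => ?_).trans tsum_zero
  have he := ee_nonneg hβ0 hγ p
  rw [Real.zero_rpow (by linarith)]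
  simp

lemma E_deriv_zero {Y : Type*} [NormedAddCommGroup Y] [NormedSpace ℝ Y] [CompleteSpace Y]
    (A B : Y →L[ℝ] Y) {α β c : ℝ} (hβ0 : 0 < β) (hγ : β < α) (hc : 1 < c) (v : Y) :
    HasDerivWithinAt (E A B α β c v) 0 (Set.Ici 0) 0 := by
  rw [hasDerivWithinAt_iff_tendsto_slope, show Set.Ici (0:ℝ) \ {0} = Set.Ioi 0 by ext t; simp [lt_iff_le_and_ne, eq_comm]]
  obtain ⟨K, hK, h⟩ := E_bound A B hβ0 hγ (by linarith) v (c := c)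
  have hlim : Filter.Tendsto (fun t : ℝ => K * t ^ (c - 1)) (nhdsWithin 0 (Set.Ioi 0))
      (nhds 0) := by
    have : Continuous (fun t : ℝ => K * t ^ (c - 1)) :=
      (Real.continuous_rpow_const (by linarith)).const_mul K |>.congr fun _ => rfl
    have h0 := (this.tendsto 0).mono_left (nhdsWithin_le_nhds (s := Set.Ioi 0))
    simpa [Real.zero_rpow (show c - 1 ≠ 0 by linarith)] using h0
  refine squeeze_zero_norm' ?_ hlim
  filter_upwards [Ioo_mem_nhdsGT (zero_lt_one' ℝ)] with t ht
  have ht0 : 0 < t := ht.1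
  rw [slope_def_module, E_zero A B hβ0 hγ (by linarith) v, sub_zero, sub_zero, norm_smul,
    Real.norm_of_nonneg (by positivity), Real.rpow_sub_one ht0.ne']
  have := h t ht0 ht.2.le
  calc t⁻¹ * ‖E A B α β c v t‖ ≤ t⁻¹ * (K * t ^ c) := by gcongr
    _ = _ := by ring

lemma monomial_int {Y : Type*} [NormedAddCommGroup Y] [NormedSpace ℝ Y] [CompleteSpace Y]
    (v : Y) {ρ τ : ℝ} (hρ : 0 < ρ) (hτ : 0 < τ) :
    ∫ s in (0:ℝ)..τ, (τ - s) ^ (ρ - 1) • (s • v) =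
      Real.Gamma ρ • (τ ^ (1 + ρ) / Real.Gamma (1 + ρ + 1)) • v := by
  have hr := frac_int_real (ρ := ρ) (μ := 1) (τ := τ) hρ (by norm_num) hτ
  simp only [smul_smul]
  rw [intervalIntegral.integral_smul_const, ← hr]
  have hG : Real.Gamma (1 + 1) = 1 := by
    rw [Real.Gamma_add_one one_ne_zero, Real.Gamma_one, mul_one]
  simp [hG]

lemma monomial_deriv {Y : Type*} [NormedAddCommGroup Y] [NormedSpace ℝ Y]
    (v : Y) {μ t : ℝ} (hμ : 0 < μ) (ht : 0 < t) :
    HasDerivAt (fun t : ℝ => (t ^ μ / Real.Gamma (μ + 1)) • v)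
      ((t ^ (μ - 1) / Real.Gamma μ) • v) t := by
  refine HasDerivAt.smul_const ?_ _
  have h1 := (Real.hasDerivAt_rpow_const (x := t) (p := μ)
    (Or.inl ht.ne')).div_const (Real.Gamma (μ + 1))
  convert h1 using 1
  rw [Real.Gamma_add_one hμ.ne', mul_div_mul_left _ _ hμ.ne']

/-- The mild solution of the homogeneous multi-term fractional evolution equation
satisfies `x(0) = η`, `x'(0) = η̂`, its Caputo derivatives of orders `α ∈ (1,2)` and
`β ∈ (0,1)` exist for `t > 0`, and `(ᶜD^α x)(t) − A (ᶜD^β x)(t) = B x(t)`. -/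
theorem homogeneous_mild_solution {Y : Type*} [NormedAddCommGroup Y] [NormedSpace ℝ Y]
    [CompleteSpace Y] (A B : Y →L[ℝ] Y) (α β : ℝ)
    (hα1 : 1 < α) (hα2 : α < 2) (hβ0 : 0 < β) (hβ1 : β < 1) (η ηh : Y) (x : ℝ → Y)
    (hx : ∀ t : ℝ, 0 ≤ t → x t = η
      + (∑' p : ℕ × ℕ, ((t ^ ((p.1 : ℝ) * (α - β) + (p.2 : ℝ) * α + α)) /
          Real.Gamma ((p.1 : ℝ) * (α - β) + (p.2 : ℝ) * α + α + 1)) • (Q A B p.1 p.2) (B η))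
      + (∑' p : ℕ × ℕ, ((t ^ ((p.1 : ℝ) * (α - β) + (p.2 : ℝ) * α + 1)) /
          Real.Gamma ((p.1 : ℝ) * (α - β) + (p.2 : ℝ) * α + 2)) • (Q A B p.1 p.2) ηh)) :
    x 0 = η ∧
    HasDerivWithinAt x ηh (Set.Ici 0) 0 ∧
    ∃ Iα' Dα Dβ : ℝ → Y,
      (∀ t : ℝ, 0 < t → HasDerivWithinAt
        (fun τ => (Real.Gamma (2 - α))⁻¹ •
          ∫ s in (0:ℝ)..τ, ((τ - s) ^ (1 - α)) • (x s - η - s • ηh))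
        (Iα' t) (Set.Ici 0) t) ∧
      (∀ t : ℝ, 0 < t → HasDerivWithinAt Iα' (Dα t) (Set.Ici 0) t) ∧
      (∀ t : ℝ, 0 < t → HasDerivWithinAt
        (fun τ => (Real.Gamma (1 - β))⁻¹ •
          ∫ s in (0:ℝ)..τ, ((τ - s) ^ (-β)) • (x s - η))
        (Dβ t) (Set.Ici 0) t) ∧
      (∀ t : ℝ, 0 < t → Dα t - A (Dβ t) = B (x t)) := by
  have hγ : β < α := by linarith
  have hG2 : Real.Gamma (1 + 1) = 1 := by
    rw [Real.Gamma_add_one one_ne_zero, Real.Gamma_one, mul_one]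
  have hxE : ∀ t : ℝ, 0 ≤ t → x t = η + E A B α β α (B η) t + E A B α β 1 ηh t := by
    intro t ht
    rw [hx t ht]
    unfold E W ee
    simp only [add_assoc, one_add_one_eq_two]
  have hα0 : 0 < α := by linarith
  have hx0 : x 0 = η := by
    rw [hxE 0 le_rfl, E_zero A B hβ0 hγ hα0, E_zero A B hβ0 hγ one_pos]
    simp
  -- the convolution integrals
  have hIα : ∀ τ : ℝ, 0 < τ → (Real.Gamma (2 - α))⁻¹ •
      ∫ s in (0:ℝ)..τ, ((τ - s) ^ (1 - α)) • (x s - η - s • ηh) =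
      E A B α β 2 (B η) τ + E A B α β (3 - α) ηh τ
        - (τ ^ (3 - α) / Real.Gamma (3 - α + 1)) • ηh := by
    intro τ hτ
    have hρ : 0 < 2 - α := by linarith
    have hG : Real.Gamma (2 - α) ≠ 0 := (Real.Gamma_pos_of_pos hρ).ne'
    have c1 := kernel_smul_int hρ hτ (E_cont A B hβ0 hγ hα0.le (B η) hτ)
    have c2 := kernel_smul_int hρ hτ (E_cont A B hβ0 hγ zero_le_one ηh hτ)
    have c3 := kernel_smul_int hρ hτ (f := fun s => s • ηh) (by fun_prop)
    have e : ∫ s in (0:ℝ)..τ, ((τ - s) ^ (1 - α)) • (x s - η - s • ηh) =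
        ∫ s in (0:ℝ)..τ, (((τ - s) ^ (2 - α - 1)) • E A B α β α (B η) s
          + ((τ - s) ^ (2 - α - 1)) • E A B α β 1 ηh s) - ((τ - s) ^ (2 - α - 1)) • s • ηh := by
      refine intervalIntegral.integral_congr fun s hs => ?_
      rw [Set.uIcc_of_le hτ.le] at hs
      simp only [hxE s hs.1, show 2 - α - 1 = 1 - α by ring]
      rw [← smul_add, ← smul_sub]
      congr 1
      abel
    rw [e, intervalIntegral.integral_sub (c1.add c2) c3, intervalIntegral.integral_add c1 c2,
      E_int A B hβ0 hγ hα0.le _ hρ hτ, E_int A B hβ0 hγ zero_le_one _ hρ hτ,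
      monomial_int _ hρ hτ, ← smul_add, ← smul_sub, smul_smul, inv_mul_cancel₀ hG, one_smul]
    congr 2 <;> ring_nf
  have hIβ : ∀ τ : ℝ, 0 < τ → (Real.Gamma (1 - β))⁻¹ •
      ∫ s in (0:ℝ)..τ, ((τ - s) ^ (-β)) • (x s - η) =
      E A B α β (α - β + 1) (B η) τ + E A B α β (1 - β + 1) ηh τ := by
    intro τ hτ
    have hρ : 0 < 1 - β := by linarith
    have hG : Real.Gamma (1 - β) ≠ 0 := (Real.Gamma_pos_of_pos hρ).ne'
    have c1 := kernel_smul_int hρ hτ (E_cont A B hβ0 hγ hα0.le (B η) hτ)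
    have c2 := kernel_smul_int hρ hτ (E_cont A B hβ0 hγ zero_le_one ηh hτ)
    have e : ∫ s in (0:ℝ)..τ, ((τ - s) ^ (-β)) • (x s - η) =
        ∫ s in (0:ℝ)..τ, (((τ - s) ^ (1 - β - 1)) • E A B α β α (B η) s
          + ((τ - s) ^ (1 - β - 1)) • E A B α β 1 ηh s) := by
      refine intervalIntegral.integral_congr fun s hs => ?_
      rw [Set.uIcc_of_le hτ.le] at hs
      simp only [hxE s hs.1, show 1 - β - 1 = -β by ring]
      rw [← smul_add]
      congr 1
      abel
    rw [e, intervalIntegral.integral_add c1 c2,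
      E_int A B hβ0 hγ hα0.le _ hρ hτ, E_int A B hβ0 hγ zero_le_one _ hρ hτ,
      ← smul_add, smul_smul, inv_mul_cancel₀ hG, one_smul]
    congr 2 <;> ring_nf
  refine ⟨hx0, ?_, fun t => E A B α β 1 (B η) t + E A B α β (2 - α) ηh t
        - (t ^ (2 - α) / Real.Gamma (2 - α + 1)) • ηh,
      fun t => E A B α β 0 (B η) t + E A B α β (1 - α) ηh t
        - (t ^ (1 - α) / Real.Gamma (1 - α + 1)) • ηh,
      fun t => E A B α β (α - β) (B η) t + E A B α β (1 - β) ηh t, ?_, ?_, ?_, ?_⟩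
  · have hfun : ∀ t ∈ Set.Ici (0:ℝ), x t = η + E A B α β α (B η) t
        + (t • ηh + A (E A B α β (1 + (α - β)) ηh t) + B (E A B α β (1 + α) ηh t)) := by
      intro t ht
      rw [hxE t ht]
      congr 1
      rcases (show (0:ℝ) ≤ t from ht).eq_or_lt with h | h
      · subst h
        rw [E_zero A B hβ0 hγ one_pos, E_zero A B hβ0 hγ (by linarith),
          E_zero A B hβ0 hγ (by linarith)]
        simp
      · rw [E_rec A B hβ0 hγ (by norm_num) ηh h, hG2]
        simp
    have d1 := E_deriv_zero A B hβ0 hγ hα1 (B η)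
    have d2 := A.hasFDerivAt.comp_hasDerivWithinAt (0:ℝ)
      (E_deriv_zero A B hβ0 hγ (c := 1 + (α - β)) (by linarith) ηh)
    have d3 := B.hasFDerivAt.comp_hasDerivWithinAt (0:ℝ)
      (E_deriv_zero A B hβ0 hγ (c := 1 + α) (by linarith) ηh)
    have d4 := ((hasDerivAt_id (0:ℝ)).smul_const ηh).hasDerivWithinAt (s := Set.Ici 0)
    have d := (d1.const_add η).add ((d4.add d2).add d3)
    have d' := d.congr hfun (hfun 0 Set.self_mem_Ici)
    simpa using d'
  · intro t ht
    refine HasDerivAt.hasDerivWithinAt ?_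
    have d1 := E_deriv A B hβ0 hγ (c := 2) (by norm_num) (B η) ht
    have d2 := E_deriv A B hβ0 hγ (c := 3 - α) (by linarith) ηh ht
    have d3 := monomial_deriv ηh (μ := 3 - α) (by linarith) ht
    have d := (d1.add d2).sub d3
    have d' := d.congr_of_eventuallyEq (f₁ := fun τ => (Real.Gamma (2 - α))⁻¹ •
          ∫ s in (0:ℝ)..τ, ((τ - s) ^ (1 - α)) • (x s - η - s • ηh)) (by
      filter_upwards [Ioi_mem_nhds ht] with τ hτ
      exact hIα τ hτ)
    convert d' using 1
    rw [show (2:ℝ) - 1 = 1 by norm_num, show 3 - α - 1 = 2 - α by ring,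
      show 2 - α + 1 = 3 - α by ring]
  · intro t ht
    refine HasDerivAt.hasDerivWithinAt ?_
    have d1 := E_deriv A B hβ0 hγ (c := 1) (by norm_num) (B η) ht
    have d2 := E_deriv A B hβ0 hγ (c := 2 - α) (by linarith) ηh ht
    have d3 := monomial_deriv ηh (μ := 2 - α) (by linarith) ht
    have d := (d1.add d2).sub d3
    rw [sub_self, show 2 - α - 1 = 1 - α by ring] at d
    rw [show 1 - α + 1 = 2 - α by ring]
    exact d
  · intro t ht
    refine HasDerivAt.hasDerivWithinAt ?_
    have d1 := E_deriv A B hβ0 hγ (c := α - β + 1) (by linarith) (B η) ht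
    have d2 := E_deriv A B hβ0 hγ (c := 1 - β + 1) (by linarith) ηh ht
    have d := d1.add d2
    rw [add_sub_cancel_right, add_sub_cancel_right] at d
    refine d.congr_of_eventuallyEq ?_
    filter_upwards [Ioi_mem_nhds ht] with τ hτ
    exact hIβ τ hτ
  · intro t ht
    simp only
    rw [E_rec A B hβ0 hγ (c := 0) (by norm_num) (B η) ht,
      E_rec A B hβ0 hγ (c := 1 - α) (by linarith) ηh ht, hxE t ht.le]
    rw [show 1 - α + (α - β) = 1 - β by ring, show 1 - α + α = 1 by ring, zero_add, zero_add,
      zero_add, Real.rpow_zero, Real.Gamma_one]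
    simp only [map_add, div_one, one_smul]
    abel
end

section
/- Let Y be a Banach space, A, B bounded linear operators on Y, 1 < α < 2, 0 < β < 1, and let g : [0,∞) → Y be continuous. Define x̄(t) = ∫₀ᵗ [ ∑_{k=0}^∞ ∑_{m=0}^∞ Q_{k,m}^{A,B} (t−s)^{k(α−β)+mα+α−1} / Γ(k(α−β)+mα+α) ] g(s) ds for t ≥ 0. Then x̄(0) = 0, x̄ is differentiable with x̄′(0) = 0, the Riemann–Liouville fractional derivatives (ᴿᴸD^{α}x̄)(t) and (ᴿᴸD^{β}x̄)(t) exist for every t > 0, and x̄ satisfies (ᴿᴸD^{α}x̄)(t) − A(ᴿᴸD^{β}x̄)(t) = B x̄(t) + g(t) for all t > 0. -/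
open MeasureTheory

set_option linter.unusedVariables false
set_option linter.unusedSectionVars false

open Set Filter Topology

namespace MildSol

/-- Riemann-Liouville fractional integral. -/
noncomputable def J {Y : Type*} [NormedAddCommGroup Y] [NormedSpace ℝ Y]
    (γ : ℝ) (h : ℝ → Y) (t : ℝ) : Y :=
  ∫ s in (0:ℝ)..t, ((t - s) ^ (γ - 1) / Real.Gamma γ) • h s

/-- The kernel, extended by zero. -/
noncomputable def ker (γ t : ℝ) : ℝ := if 0 < t then t ^ (γ - 1) / Real.Gamma γ else 0

section basic
variable {Y : Type*} [NormedAddCommGroup Y] [NormedSpace ℝ Y]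

lemma ker_nonneg {γ : ℝ} (hγ : 0 < γ) (t : ℝ) : 0 ≤ ker γ t := by
  unfold ker
  split_ifs with h
  · have := Real.Gamma_pos_of_pos hγ
    positivity
  · exact le_rfl

lemma ker_meas (γ : ℝ) : Measurable (ker γ) := by
  unfold ker
  apply Measurable.ite measurableSet_Ioi _ measurable_const
  fun_prop

lemma kern_nonneg {γ t s : ℝ} (hγ : 0 < γ) (hs : s ≤ t) :
    0 ≤ (t - s) ^ (γ - 1) / Real.Gamma γ := by
  have := Real.Gamma_pos_of_pos hγ
  have := Real.rpow_nonneg (sub_nonneg.2 hs) (γ - 1)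
  positivity

lemma kern_int {γ : ℝ} (hγ : 0 < γ) (t : ℝ) :
    IntervalIntegrable (fun s => (t - s) ^ (γ - 1) / Real.Gamma γ) volume 0 t := by
  have h : IntervalIntegrable (fun x : ℝ => x ^ (γ - 1)) volume t 0 :=
    intervalIntegral.intervalIntegrable_rpow' (by linarith)
  have h2 := h.comp_sub_left t
  simp only [sub_self, sub_zero] at h2
  exact h2.div_const _

lemma kern_integral {γ : ℝ} (hγ : 0 < γ) (t : ℝ) (ht : 0 ≤ t) :
    ∫ s in (0:ℝ)..t, (t - s) ^ (γ - 1) / Real.Gamma γ = t ^ γ / Real.Gamma (γ + 1) := by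
  rw [intervalIntegral.integral_div,
    intervalIntegral.integral_comp_sub_left (fun x : ℝ => x ^ (γ - 1)) t]
  rw [sub_self, sub_zero, integral_rpow (by left; linarith)]
  rw [sub_add_cancel, Real.zero_rpow hγ.ne', Real.Gamma_add_one hγ.ne']
  have := Real.Gamma_pos_of_pos hγ
  field_simp
  simp

lemma ext_cont {h : ℝ → Y} (hh : ContinuousOn h (Ici 0)) :
    Continuous (fun s => h (max s 0)) :=
  hh.comp_continuous (by fun_prop) (fun s => le_max_right s 0)

lemma J_congr {γ : ℝ} {h h' : ℝ → Y} {t : ℝ} (ht : 0 ≤ t) (H : ∀ s, 0 ≤ s → s ≤ t → h s = h' s) :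
    J γ h t = J γ h' t := by
  unfold J
  apply intervalIntegral.integral_congr
  intro s hs
  rw [uIcc_of_le ht] at hs
  simp only
  rw [H s hs.1 hs.2]

lemma J_ext {γ : ℝ} (h : ℝ → Y) {t : ℝ} (ht : 0 ≤ t) :
    J γ h t = J γ (fun s => h (max s 0)) t :=
  J_congr ht (fun s hs _ => by rw [max_eq_left hs])

lemma J_integrable {γ : ℝ} (hγ : 0 < γ) {h : ℝ → Y} (hh : ContinuousOn h (Ici 0)) {t : ℝ}
    (ht : 0 ≤ t) :
    IntervalIntegrable (fun s => ((t - s) ^ (γ - 1) / Real.Gamma γ) • h s) volume 0 t := by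
  apply (kern_int hγ t).smul_continuousOn
  rw [uIcc_of_le ht]
  exact hh.mono (fun s hs => hs.1)

lemma J_zero (γ : ℝ) (h : ℝ → Y) : J γ h 0 = 0 := by simp [J]

lemma J_bound {γ : ℝ} (hγ : 0 < γ) {h : ℝ → Y} {t M : ℝ}
    (ht : 0 ≤ t) (hM : ∀ s, 0 ≤ s → s ≤ t → ‖h s‖ ≤ M) :
    ‖J γ h t‖ ≤ M * (t ^ γ / Real.Gamma (γ + 1)) := by
  rw [← kern_integral hγ t ht, ← intervalIntegral.integral_const_mul]
  apply intervalIntegral.norm_integral_le_of_norm_le ht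
  · filter_upwards with s hs
    rw [norm_smul, Real.norm_of_nonneg (kern_nonneg hγ hs.2), mul_comm]
    exact mul_le_mul_of_nonneg_right (hM s hs.1.le hs.2) (kern_nonneg hγ hs.2)
  · exact (kern_int hγ t).const_mul M

lemma exists_bound {h : ℝ → Y} (hh : ContinuousOn h (Ici 0)) (T : ℝ) :
    ∃ M, 0 ≤ M ∧ ∀ s, 0 ≤ s → s ≤ T → ‖h s‖ ≤ M := by
  obtain ⟨M, hM⟩ := (isCompact_Icc (a := (0:ℝ)) (b := T)).exists_bound_of_continuousOn
    (hh.mono (fun s hs => hs.1))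
  exact ⟨max M 0, le_max_right _ _, fun s h0 h1 => (hM s ⟨h0, h1⟩).trans (le_max_left _ _)⟩

lemma J_scale {γ : ℝ} (hγ : 0 < γ) (h : ℝ → Y) {t : ℝ} (ht : 0 ≤ t) :
    J γ h t = t ^ γ • ∫ u in (0:ℝ)..1, ((1 - u) ^ (γ - 1) / Real.Gamma γ) • h (t * u) := by
  rcases ht.eq_or_lt with rfl | ht
  · simp [J, Real.zero_rpow hγ.ne']
  unfold J
  have := intervalIntegral.smul_integral_comp_mul_left (a := 0) (b := 1)
    (fun s => ((t - s) ^ (γ - 1) / Real.Gamma γ) • h s) t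
  rw [mul_zero, mul_one] at this
  rw [← this, ← intervalIntegral.integral_smul, ← intervalIntegral.integral_smul]
  apply intervalIntegral.integral_congr
  intro u hu
  rw [uIcc_of_le zero_le_one] at hu
  simp only
  have h1 : t - t * u = t * (1 - u) := by ring
  rw [h1, Real.mul_rpow ht.le (by linarith [hu.2]), smul_smul, smul_smul]
  congr 1
  have h2 : t ^ γ = t * t ^ (γ - 1) := by
    rw [Real.rpow_sub_one ht.ne']; field_simp
  rw [h2]; ring

lemma J_cont {γ : ℝ} (hγ : 0 < γ) {h : ℝ → Y} (hh : ContinuousOn h (Ici 0)) :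
    ContinuousOn (J γ h) (Ici 0) := by
  have hc := ext_cont hh
  have key : ∀ T : ℝ, ContinuousOn (fun t => ∫ u in (0:ℝ)..1,
      ((1 - u) ^ (γ - 1) / Real.Gamma γ) • h (max (min t T * u) 0)) univ := by
    intro T
    rw [continuousOn_univ]
    obtain ⟨M, hM0, hM⟩ := exists_bound hh (max T 0)
    apply intervalIntegral.continuous_of_dominated_interval
      (bound := fun u => (1 - u) ^ (γ - 1) / Real.Gamma γ * M)
    · intro t
      apply Measurable.aestronglyMeasurable _ |>.smul
      · exact (hc.comp (by fun_prop : Continuous fun u => min t T * u)).aestronglyMeasurable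
      · fun_prop
    · intro t
      filter_upwards with u hu
      rw [uIoc_of_le zero_le_one] at hu
      rw [norm_smul, Real.norm_of_nonneg (kern_nonneg hγ hu.2)]
      refine mul_le_mul_of_nonneg_left (hM _ (le_max_right _ _) ?_) (kern_nonneg hγ hu.2)
      apply max_le _ (le_max_right _ _)
      by_cases hmt : 0 ≤ min t T
      · calc min t T * u ≤ min t T * 1 := mul_le_mul_of_nonneg_left hu.2 hmt
          _ ≤ T := by rw [mul_one]; exact min_le_right _ _
          _ ≤ _ := le_max_left _ _
      · push Not at hmt
        exact (mul_nonpos_of_nonpos_of_nonneg hmt.le hu.1.le).trans (le_max_right _ _)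
    · exact (kern_int hγ 1).mul_const M
    · filter_upwards with u hu
      exact (hc.comp (by fun_prop : Continuous fun t => min t T * u)).const_smul _
  have key2 : ∀ T : ℝ, ContinuousOn (J γ h) (Icc 0 T) := by
    intro T
    have h1 : ContinuousOn (fun t : ℝ => t ^ γ • ∫ u in (0:ℝ)..1,
      ((1 - u) ^ (γ - 1) / Real.Gamma γ) • h (max (min t T * u) 0)) (Icc 0 T) :=
      (Real.continuous_rpow_const hγ.le).continuousOn.smul ((key T).mono (subset_univ _))
    apply h1.congr
    intro t ht
    rw [J_scale hγ h ht.1]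
    simp only
    congr 1
    apply intervalIntegral.integral_congr
    intro u hu
    rw [uIcc_of_le zero_le_one] at hu
    simp only
    rw [min_eq_left ht.2, max_eq_left (mul_nonneg ht.1 hu.1)]
  intro t ht
  have := key2 (t + 1) t ⟨ht, by linarith⟩
  apply this.mono_of_mem_nhdsWithin
  rw [mem_nhdsWithin]
  refine ⟨Iio (t + 1), isOpen_Iio, by simp, ?_⟩
  rintro x ⟨h1, h2⟩
  exact ⟨h2, h1.le⟩

lemma J_deriv [CompleteSpace Y] {h : ℝ → Y} (hh : ContinuousOn h (Ici 0)) {t : ℝ} (ht : 0 ≤ t) :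
    HasDerivWithinAt (J 1 h) (h t) (Ici 0) t := by
  have hc := ext_cont hh
  have h1 : HasDerivAt (fun t => ∫ s in (0:ℝ)..t, h (max s 0)) (h (max t 0)) t :=
    intervalIntegral.integral_hasDerivAt_right (hc.intervalIntegrable _ _)
      (hc.stronglyMeasurableAtFilter _ _) hc.continuousAt
  rw [max_eq_left ht] at h1
  refine h1.hasDerivWithinAt.congr_of_mem ?_ ht
  intro x hx
  rw [J_ext h hx]
  simp [J]

end basic
section semigroup
variable {Y : Type*} [NormedAddCommGroup Y] [NormedSpace ℝ Y] [CompleteSpace Y]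

open scoped Convolution

lemma beta_real {γ δ a : ℝ} (hγ : 0 < γ) (hδ : 0 < δ) (ha : 0 < a) :
    ∫ u in (0:ℝ)..a, u ^ (δ - 1) * (a - u) ^ (γ - 1) =
      a ^ (δ + γ - 1) * (Real.Gamma δ * Real.Gamma γ / Real.Gamma (δ + γ)) := by
  have h := Complex.betaIntegral_scaled δ γ ha
  rw [Complex.betaIntegral_eq_Gamma_mul_div _ _ (by simpa) (by simpa)] at h
  have h2 : ∫ x in (0:ℝ)..a, (x : ℂ) ^ ((δ : ℂ) - 1) * ((a : ℂ) - x) ^ ((γ : ℂ) - 1) =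
      ((∫ u in (0:ℝ)..a, u ^ (δ - 1) * (a - u) ^ (γ - 1) : ℝ) : ℂ) := by
    rw [← intervalIntegral.integral_ofReal]
    apply intervalIntegral.integral_congr
    intro u hu
    rw [uIcc_of_le ha.le] at hu
    simp only
    push_cast
    rw [Complex.ofReal_cpow hu.1, Complex.ofReal_cpow (by linarith [hu.2])]
    push_cast
    rfl
  rw [h2, ← Complex.ofReal_add, Complex.Gamma_ofReal, Complex.Gamma_ofReal, Complex.Gamma_ofReal,
    show ((δ + γ : ℝ) : ℂ) - 1 = ((δ + γ - 1 : ℝ) : ℂ) by push_cast; rfl,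
    ← Complex.ofReal_cpow ha.le] at h
  exact_mod_cast h

lemma beta_int {γ δ a : ℝ} (hγ : 0 < γ) (hδ : 0 < δ) (ha : 0 < a) :
    IntervalIntegrable (fun u : ℝ => u ^ (δ - 1) * (a - u) ^ (γ - 1)) volume 0 a := by
  apply intervalIntegral.intervalIntegrable_of_integral_ne_zero
  rw [beta_real hγ hδ ha]
  have := Real.Gamma_pos_of_pos hγ
  have := Real.Gamma_pos_of_pos hδ
  have := Real.Gamma_pos_of_pos (add_pos hδ hγ)
  positivity

lemma ker_ker_ind (γ δ x : ℝ) : (fun u => ker δ u * ker γ (x - u)) =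
    (Ioo 0 x).indicator (fun u : ℝ => u ^ (δ - 1) * (x - u) ^ (γ - 1) /
      (Real.Gamma δ * Real.Gamma γ)) := by
  ext u
  by_cases h1 : 0 < u <;> by_cases h2 : u < x <;> simp [ker, indicator, h1, h2]
  rw [div_mul_div_comm]

lemma ker_ker_exists {γ δ : ℝ} (hγ : 0 < γ) (hδ : 0 < δ) (x : ℝ) :
    Integrable (fun u => ker δ u * ker γ (x - u)) := by
  rw [ker_ker_ind, integrable_indicator_iff measurableSet_Ioo]
  by_cases hx : 0 < x
  · have := (beta_int hγ hδ hx).div_const (Real.Gamma δ * Real.Gamma γ)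
    rw [intervalIntegrable_iff_integrableOn_Ioo_of_le hx.le] at this
    exact this
  · rw [Ioo_eq_empty hx]
    exact integrableOn_empty

lemma ker_ker {γ δ : ℝ} (hγ : 0 < γ) (hδ : 0 < δ) (x : ℝ) :
    ∫ u, ker δ u * ker γ (x - u) = ker (γ + δ) x := by
  rw [ker_ker_ind, integral_indicator measurableSet_Ioo]
  by_cases hx : 0 < x
  · rw [← integral_Ioc_eq_integral_Ioo, ← intervalIntegral.integral_of_le hx.le,
      intervalIntegral.integral_div, beta_real hγ hδ hx]
    simp only [ker, if_pos hx]
    have := Real.Gamma_pos_of_pos hγ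
    have := Real.Gamma_pos_of_pos hδ
    have := Real.Gamma_pos_of_pos (add_pos hδ hγ)
    rw [add_comm γ δ]
    field_simp
  · simp [ker, hx]

lemma conv_ind (γ : ℝ) (h : ℝ → Y) (t : ℝ) :
    (fun s => ker γ (t - s) • (Ioi (0:ℝ)).indicator h s) =
    (Ioo 0 t).indicator (fun s => ((t - s) ^ (γ - 1) / Real.Gamma γ) • h s) := by
  ext s
  by_cases h1 : 0 < s <;> by_cases h2 : s < t <;> simp [ker, indicator, h1, h2]

lemma conv_exists {γ : ℝ} (hγ : 0 < γ) {h : ℝ → Y} (hh : ContinuousOn h (Ici 0)) (t : ℝ) :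
    Integrable (fun s => ker γ (t - s) • (Ioi (0:ℝ)).indicator h s) := by
  rw [conv_ind, integrable_indicator_iff measurableSet_Ioo]
  by_cases ht : 0 < t
  · have := J_integrable hγ hh ht.le
    rw [intervalIntegrable_iff_integrableOn_Ioo_of_le ht.le] at this
    exact this
  · rw [Ioo_eq_empty ht]
    exact integrableOn_empty

lemma conv_eq (γ : ℝ) (h : ℝ → Y) (t : ℝ) :
    ∫ s, ker γ (t - s) • (Ioi (0:ℝ)).indicator h s = (Ioi (0:ℝ)).indicator (J γ h) t := by
  rw [conv_ind, integral_indicator measurableSet_Ioo]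
  by_cases ht : 0 < t
  · rw [← integral_Ioc_eq_integral_Ioo, ← intervalIntegral.integral_of_le ht.le]
    simp [ht, J]
  · simp [ht]

lemma J_J {γ δ : ℝ} (hγ : 0 < γ) (hδ : 0 < δ) {h : ℝ → Y} (hh : ContinuousOn h (Ici 0)) {t : ℝ}
    (ht : 0 ≤ t) : J γ (J δ h) t = J (γ + δ) h t := by
  rcases ht.eq_or_lt with rfl | ht
  · simp [J_zero]
  set L : Y →L[ℝ] ℝ →L[ℝ] Y := (ContinuousLinearMap.lsmul ℝ ℝ).flip with hL
  have hLa : ∀ (y : Y) (r : ℝ), L y r = r • y := fun y r => rfl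
  have e1 : ((Ioi (0:ℝ)).indicator h ⋆[L, volume] ker δ) = (Ioi (0:ℝ)).indicator (J δ h) := by
    ext x
    rw [convolution_def, ← conv_eq δ h x]
    rfl
  have e2 : (ker δ ⋆[ContinuousLinearMap.mul ℝ ℝ, volume] ker γ) = ker (γ + δ) := by
    ext x
    rw [convolution_def, ← ker_ker hγ hδ x]
    rfl
  have nk : ∀ {γ : ℝ}, 0 < γ → (fun x => ‖ker γ x‖) = ker γ := fun hγ => by
    ext x; exact Real.norm_of_nonneg (ker_nonneg hγ x)
  have main := convolution_assoc (μ := volume) (ν := volume) (f := (Ioi (0:ℝ)).indicator h)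
    (g := ker δ) (k := ker γ) L L L (ContinuousLinearMap.mul ℝ ℝ)
    (fun x y z => by simp only [hLa, ContinuousLinearMap.mul_apply', smul_smul]; rw [mul_comm])
    (x₀ := t) ?_ (ker_meas δ).aestronglyMeasurable (ker_meas γ).aestronglyMeasurable
    (Eventually.of_forall fun x => conv_exists hδ hh x)
    ?_ ?_
  · rw [e1, e2, convolution_def, convolution_def] at main
    simp only [hLa] at main
    rw [conv_eq, conv_eq] at main
    simpa [ht] using main
  · rw [aestronglyMeasurable_indicator_iff measurableSet_Ioi]
    exact (hh.mono Ioi_subset_Ici_self).aestronglyMeasurable measurableSet_Ioi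
  · rw [nk hγ, nk hδ]
    exact Eventually.of_forall fun x => ker_ker_exists hγ hδ x
  · rw [nk hγ, nk hδ, e2]
    have := conv_exists (add_pos hγ hδ) hh.norm t
    unfold ConvolutionExistsAt
    convert this using 2 with s
    simp only [ContinuousLinearMap.mul_apply', smul_eq_mul]
    rw [mul_comm]
    congr 1
    by_cases hs : 0 < s <;> simp [indicator, hs]

end semigroup
section series

lemma Q_succ_zero {R : Type*} [Ring R] (A B : R) (k : ℕ) : Q A B (k + 1) 0 = A * Q A B k 0 := by
  simp [Q, pow_succ']

lemma Q_zero_succ {R : Type*} [Ring R] (A B : R) (m : ℕ) : Q A B 0 (m + 1) = B * Q A B 0 m := by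
  simp [Q]

lemma Q_succ_succ {R : Type*} [Ring R] (A B : R) (k m : ℕ) :
    Q A B (k + 1) (m + 1) = A * Q A B k (m + 1) + B * Q A B (k + 1) m := by
  rw [Q, Finset.sum_range_succ, Q, Finset.mul_sum]
  congr 1
  · apply Finset.sum_congr rfl
    intro l hl
    have : l ≤ k := by simpa [Nat.lt_succ_iff] using hl
    rw [Nat.succ_sub this, pow_succ']
    simp only [mul_assoc]
  · simp

variable {Y : Type*} [NormedAddCommGroup Y] [NormedSpace ℝ Y]

lemma Q_norm (A B : Y →L[ℝ] Y) (n : ℕ) : ∀ k m, k + m = n →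
    ‖Q A B k m‖ ≤ (‖A‖ + ‖B‖) ^ n := by
  induction n with
  | zero =>
    intro k m h
    obtain ⟨rfl, rfl⟩ : k = 0 ∧ m = 0 := by omega
    simp only [Q, pow_zero]
    exact ContinuousLinearMap.norm_id_le
  | succ n ih =>
    have hp : 0 ≤ (‖A‖ + ‖B‖) ^ n := by positivity
    intro k m h
    rw [pow_succ', add_mul]
    have hA : ∀ k' m', k' + m' = n → ‖A * Q A B k' m'‖ ≤ ‖A‖ * (‖A‖ + ‖B‖) ^ n := fun k' m' h =>
      (norm_mul_le _ _).trans (mul_le_mul_of_nonneg_left (ih _ _ h) (norm_nonneg _))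
    have hB : ∀ k' m', k' + m' = n → ‖B * Q A B k' m'‖ ≤ ‖B‖ * (‖A‖ + ‖B‖) ^ n := fun k' m' h =>
      (norm_mul_le _ _).trans (mul_le_mul_of_nonneg_left (ih _ _ h) (norm_nonneg _))
    have hA0 : 0 ≤ ‖A‖ * (‖A‖ + ‖B‖) ^ n := by positivity
    have hB0 : 0 ≤ ‖B‖ * (‖A‖ + ‖B‖) ^ n := by positivity
    rcases k with _ | k <;> rcases m with _ | m
    · omega
    · rw [Q_zero_succ]
      linarith [hB 0 m (by omega)]
    · rw [Q_succ_zero]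
      linarith [hA k 0 (by omega)]
    · rw [Q_succ_succ]
      exact (norm_add_le _ _).trans (add_le_add (hA _ _ (by omega)) (hB _ _ (by omega)))

lemma Gamma_bound {R x : ℝ} (hR : 0 < R) (hx : 0 ≤ x) :
    R ^ x ≤ Real.exp R * Real.Gamma (x + 1) := by
  have hi : IntegrableOn (fun t : ℝ => Real.exp (-t) * t ^ (x + 1 - 1)) (Ioi 0) :=
    Real.GammaIntegral_convergent (by linarith)
  have h1 : R ^ x * Real.exp (-R) ≤ Real.Gamma (x + 1) := by
    rw [Real.Gamma_eq_integral (by linarith)]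
    calc R ^ x * Real.exp (-R) = ∫ t in Ioi R, R ^ x * Real.exp (-t) := by
          rw [integral_const_mul, integral_exp_neg_Ioi]
      _ ≤ ∫ t in Ioi R, Real.exp (-t) * t ^ (x + 1 - 1) := by
          apply setIntegral_mono_on
          · exact (integrableOn_exp_neg_Ioi R).const_mul _
          · exact hi.mono_set (Ioi_subset_Ioi hR.le)
          · exact measurableSet_Ioi
          · intro t ht
            rw [mul_comm, add_sub_cancel_right]
            gcongr
            exact (mem_Ioi.1 ht).le
      _ ≤ ∫ t in Ioi 0, Real.exp (-t) * t ^ (x + 1 - 1) := by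
          apply setIntegral_mono_set hi
          · filter_upwards [self_mem_ae_restrict measurableSet_Ioi] with t ht
            have : (0:ℝ) < t := ht
            simp only [Pi.zero_apply]
            positivity
          · exact (Ioi_subset_Ioi hR.le).eventuallyLE
  rw [Real.exp_neg] at h1
  have := Real.exp_pos R
  calc R ^ x = Real.exp R * (R ^ x * (Real.exp R)⁻¹) := by field_simp
    _ ≤ _ := by gcongr

/-- The base order attached to an index. -/
noncomputable def w (σ α : ℝ) (p : ℕ × ℕ) : ℝ := (p.1 : ℝ) * σ + (p.2 : ℝ) * α

lemma w_nonneg {σ α : ℝ} (hσ : 0 < σ) (hα : σ ≤ α) (p : ℕ × ℕ) : 0 ≤ w σ α p := by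
  have : 0 < α := by linarith
  unfold w; positivity

lemma summable_main (A B : Y →L[ℝ] Y) {σ α c T : ℝ} (hσ : 0 < σ) (hα : σ ≤ α) (hc : 0 ≤ c)
    (hT : 0 ≤ T) :
    Summable (fun p : ℕ × ℕ => ‖Q A B p.1 p.2‖ *
      (T ^ (w σ α p + c) / Real.Gamma (w σ α p + c + 1))) := by
  set M := ‖A‖ + ‖B‖ with hM
  have hM0 : 0 ≤ M := by positivity
  set z : ℝ := 1 / (2 * (M + 1)) with hz
  have hz0 : 0 < z := by positivity
  have hz1 : z ≤ 1 := by
    rw [hz, div_le_one (by positivity)]; linarith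
  have hMz : M * z ≤ 1 / 2 := by
    rw [hz]; field_simp; linarith
  set q : ℝ := z ^ (1 / σ) with hq
  have hq0 : 0 < q := by positivity
  have hq1 : q ≤ 1 := Real.rpow_le_one hz0.le hz1 (by positivity)
  have hqσ : q ^ σ = z := by
    rw [hq, ← Real.rpow_mul hz0.le, one_div_mul_cancel hσ.ne', Real.rpow_one]
  set R : ℝ := (T + 1) / q with hR
  have hR0 : 0 < R := by positivity
  have hTR : T ≤ q * R := by
    rw [hR]; field_simp; linarith
  have hs : Summable (fun p : ℕ × ℕ => Real.exp R * ((1 / 2 : ℝ) ^ p.1 * (1 / 2 : ℝ) ^ p.2)) := by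
    apply Summable.mul_left
    have h := summable_geometric_two
    exact h.mul_of_nonneg h (fun n => by positivity) (fun n => by positivity)
  refine Summable.of_nonneg_of_le ?_ ?_ hs
  · intro p
    have := w_nonneg hσ hα p
    have := Real.Gamma_pos_of_pos (show 0 < w σ α p + c + 1 by linarith)
    positivity
  · intro p
    have hw := w_nonneg hσ hα p
    set x := w σ α p + c with hx
    have hx0 : 0 ≤ x := by linarith
    have hG := Real.Gamma_pos_of_pos (show 0 < x + 1 by linarith)
    have h1 : T ^ x / Real.Gamma (x + 1) ≤ Real.exp R * z ^ (p.1 + p.2) := by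
      rw [div_le_iff₀ hG]
      calc T ^ x ≤ (q * R) ^ x := Real.rpow_le_rpow hT hTR hx0
        _ = q ^ x * R ^ x := Real.mul_rpow hq0.le hR0.le
        _ ≤ z ^ (p.1 + p.2) * (Real.exp R * Real.Gamma (x + 1)) := by
            refine mul_le_mul ?_ (Gamma_bound hR0 hx0) (by positivity) (by positivity)
            rw [← hqσ, ← Real.rpow_natCast, ← Real.rpow_mul hq0.le]
            apply Real.rpow_le_rpow_of_exponent_ge hq0 hq1
            rw [hx, w]
            push_cast
            have : (p.2 : ℝ) * σ ≤ p.2 * α := by gcongr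
            nlinarith
        _ = _ := by ring
    calc _ ≤ M ^ (p.1 + p.2) * (Real.exp R * z ^ (p.1 + p.2)) := by
          refine mul_le_mul (Q_norm A B _ _ _ rfl) h1 (by positivity) (by positivity)
      _ = Real.exp R * (M * z) ^ (p.1 + p.2) := by rw [mul_pow]; ring
      _ ≤ Real.exp R * (1 / 2) ^ (p.1 + p.2) := by gcongr
      _ = _ := by rw [pow_add]

/-- Terms of the series. -/
noncomputable def term (A B : Y →L[ℝ] Y) (σ α : ℝ) (g : ℝ → Y) (c t : ℝ) (p : ℕ × ℕ) : Y :=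
  Q A B p.1 p.2 (J (w σ α p + c) g t)

/-- The series. -/
noncomputable def F (A B : Y →L[ℝ] Y) (σ α : ℝ) (g : ℝ → Y) (c t : ℝ) : Y :=
  ∑' p, term A B σ α g c t p

variable [CompleteSpace Y]

lemma J_clm (A : Y →L[ℝ] Y) {γ : ℝ} (hγ : 0 < γ) {h : ℝ → Y} (hh : ContinuousOn h (Ici 0)) {t : ℝ}
    (ht : 0 ≤ t) : J γ (fun s => A (h s)) t = A (J γ h t) := by
  unfold J
  rw [← A.intervalIntegral_comp_comm (J_integrable hγ hh ht)]
  simp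

lemma J_add {γ : ℝ} (hγ : 0 < γ) {h h' : ℝ → Y} (hh : ContinuousOn h (Ici 0))
    (hh' : ContinuousOn h' (Ici 0)) {t : ℝ} (ht : 0 ≤ t) :
    J γ (fun s => h s + h' s) t = J γ h t + J γ h' t := by
  unfold J
  rw [← intervalIntegral.integral_add (J_integrable hγ hh ht) (J_integrable hγ hh' ht)]
  simp only [smul_add]

lemma term_bound (A B : Y →L[ℝ] Y) {σ α c T : ℝ} (hσ : 0 < σ) (hα : σ ≤ α)
    {g : ℝ → Y} (hg : ContinuousOn g (Ici 0)) (hc : 0 < c) (hT : 0 ≤ T) : ∃ b : ℕ × ℕ → ℝ, Summable b ∧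
    ∀ p t, 0 ≤ t → t ≤ T → ‖term A B σ α g c t p‖ ≤ b p := by
  obtain ⟨M, hM0, hM⟩ := exists_bound hg T
  refine ⟨_, (summable_main A B hσ hα hc.le hT).mul_left M, ?_⟩
  intro p t h0 h1
  have hw := w_nonneg hσ hα p
  have hG := Real.Gamma_pos_of_pos (show 0 < w σ α p + c + 1 by linarith)
  calc _ ≤ ‖Q A B p.1 p.2‖ * ‖J (w σ α p + c) g t‖ := ContinuousLinearMap.le_opNorm _ _
    _ ≤ ‖Q A B p.1 p.2‖ * (M * (t ^ (w σ α p + c) / Real.Gamma (w σ α p + c + 1))) := by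
        gcongr
        exact J_bound (by linarith) h0 (fun s hs hs' => hM s hs (hs'.trans h1))
    _ ≤ ‖Q A B p.1 p.2‖ * (M * (T ^ (w σ α p + c) / Real.Gamma (w σ α p + c + 1))) := by
        gcongr
    _ = _ := by ring

lemma F_hasSum (A B : Y →L[ℝ] Y) {σ α c : ℝ} (hσ : 0 < σ) (hα : σ ≤ α)
    {g : ℝ → Y} (hg : ContinuousOn g (Ici 0)) (hc : 0 < c) {t : ℝ} (ht : 0 ≤ t) :
    HasSum (term A B σ α g c t) (F A B σ α g c t) := by
  obtain ⟨b, hb, hb'⟩ := term_bound A B hσ hα hg hc ht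
  exact (Summable.of_norm_bounded hb (fun p => hb' p t ht le_rfl)).hasSum

lemma F_cont (A B : Y →L[ℝ] Y) {σ α c : ℝ} (hσ : 0 < σ) (hα : σ ≤ α)
    {g : ℝ → Y} (hg : ContinuousOn g (Ici 0)) (hc : 0 < c) : ContinuousOn (F A B σ α g c) (Ici 0) := by
  have key2 : ∀ T : ℝ, 0 ≤ T → ContinuousOn (F A B σ α g c) (Icc 0 T) := by
    intro T hT
    obtain ⟨b, hb, hb'⟩ := term_bound A B hσ hα hg hc hT
    refine continuousOn_tsum ?_ hb (fun p t ht => hb' p t ht.1 ht.2)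
    intro p
    have hw := w_nonneg hσ hα p
    exact (Q A B p.1 p.2).continuous.comp_continuousOn
      ((J_cont (by linarith) hg).mono (fun s hs => hs.1))
  intro t ht
  have ht' : (0:ℝ) ≤ t := ht
  have := key2 (t + 1) (by linarith) t ⟨ht, by linarith⟩
  apply this.mono_of_mem_nhdsWithin
  rw [mem_nhdsWithin]
  refine ⟨Iio (t + 1), isOpen_Iio, by simp, ?_⟩
  rintro x ⟨h1, h2⟩
  exact ⟨h2, h1.le⟩

lemma term_cont (A B : Y →L[ℝ] Y) {σ α c : ℝ} (hσ : 0 < σ) (hα : σ ≤ α)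
    {g : ℝ → Y} (hg : ContinuousOn g (Ici 0)) (hc : 0 < c) (p : ℕ × ℕ) :
    ContinuousOn (fun t => term A B σ α g c t p) (Ici 0) := by
  have hw := w_nonneg hσ hα p
  exact (Q A B p.1 p.2).continuous.comp_continuousOn (J_cont (by linarith) hg)

lemma J_term (A B : Y →L[ℝ] Y) {σ α c : ℝ} (hσ : 0 < σ) (hα : σ ≤ α)
    {g : ℝ → Y} (hg : ContinuousOn g (Ici 0)) (hc : 0 < c) {δ t : ℝ} (hδ : 0 < δ) (ht : 0 ≤ t) (p : ℕ × ℕ) :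
    J δ (fun t => term A B σ α g c t p) t = term A B σ α g (δ + c) t p := by
  have hw := w_nonneg hσ hα p
  unfold term
  rw [J_clm _ hδ (J_cont (by linarith) hg) ht, J_J hδ (by linarith) hg ht]
  congr 2
  ring

lemma J_F (A B : Y →L[ℝ] Y) {σ α c : ℝ} (hσ : 0 < σ) (hα : σ ≤ α)
    {g : ℝ → Y} (hg : ContinuousOn g (Ici 0)) (hc : 0 < c) {δ t : ℝ} (hδ : 0 < δ) (ht : 0 ≤ t) :
    J δ (F A B σ α g c) t = F A B σ α g (δ + c) t := by
  obtain ⟨b, hb, hb'⟩ := term_bound A B hσ hα hg hc ht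
  have h : HasSum (fun p => J δ (fun t => term A B σ α g c t p) t) (J δ (F A B σ α g c) t) := by
    unfold J
    apply intervalIntegral.hasSum_integral_of_dominated_convergence
      (fun p s => (t - s) ^ (δ - 1) / Real.Gamma δ * b p)
    · intro p
      exact (J_integrable hδ (term_cont A B hσ hα hg hc p) ht).def'.aestronglyMeasurable
    · intro p
      filter_upwards with s hs
      rw [uIoc_of_le ht] at hs
      rw [norm_smul, Real.norm_of_nonneg (kern_nonneg hδ hs.2)]
      exact mul_le_mul_of_nonneg_left (hb' p s hs.1.le hs.2) (kern_nonneg hδ hs.2)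
    · filter_upwards with s hs
      exact hb.mul_left _
    · simp_rw [tsum_mul_left]
      exact (kern_int hδ t).mul_const _
    · filter_upwards with s hs
      rw [uIoc_of_le ht] at hs
      exact (F_hasSum A B hσ hα hg hc hs.1.le).const_smul _
  have h2 := F_hasSum A B hσ hα hg (add_pos hδ hc) ht
  refine HasSum.unique h ?_
  convert h2 using 2 with p
  exact J_term A B hσ hα hg hc hδ ht p

lemma F_rec (A B : Y →L[ℝ] Y) {σ α c : ℝ} (hσ : 0 < σ) (hα : σ ≤ α)
    {g : ℝ → Y} (hg : ContinuousOn g (Ici 0)) (hc : 0 < c) {t : ℝ} (ht : 0 ≤ t) :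
    F A B σ α g c t = J c g t + A (F A B σ α g (c + σ) t) + B (F A B σ α g (c + α) t) := by
  have hα0 : 0 < α := by linarith
  have hA := A.hasSum (F_hasSum A B hσ hα hg (add_pos hc hσ) ht)
  have hB := B.hasSum (F_hasSum A B hσ hα hg (add_pos hc hα0) ht)
  set i1 : ℕ × ℕ → ℕ × ℕ := fun p => (p.1 + 1, p.2) with hi1
  set i2 : ℕ × ℕ → ℕ × ℕ := fun p => (p.1, p.2 + 1) with hi2
  have i1i : Function.Injective i1 := by
    rintro ⟨a, b⟩ ⟨a', b'⟩ h; simpa [hi1] using h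
  have i2i : Function.Injective i2 := by
    rintro ⟨a, b⟩ ⟨a', b'⟩ h; simpa [hi2] using h
  have s0 : HasSum (fun p : ℕ × ℕ => if p = (0, 0) then J c g t else 0) (J c g t) :=
    hasSum_ite_eq _ _
  have s1 : HasSum (fun p : ℕ × ℕ => if p.1 = 0 then (0 : Y) else
      A (term A B σ α g (c + σ) t (p.1 - 1, p.2))) (A (F A B σ α g (c + σ) t)) := by
    rw [← i1i.hasSum_iff]
    · convert hA using 1
      all_goals (try ext p)
      all_goals simp [hi1]
    · rintro ⟨k, m⟩ hx
      rcases k with _ | k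
      · simp
      · exact absurd ⟨(k, m), rfl⟩ hx
  have s2 : HasSum (fun p : ℕ × ℕ => if p.2 = 0 then (0 : Y) else
      B (term A B σ α g (c + α) t (p.1, p.2 - 1))) (B (F A B σ α g (c + α) t)) := by
    rw [← i2i.hasSum_iff]
    · convert hB using 1
      all_goals (try ext p)
      all_goals simp [hi2]
    · rintro ⟨k, m⟩ hx
      rcases m with _ | m
      · simp
      · exact absurd ⟨(k, m), rfl⟩ hx
  refine HasSum.unique (F_hasSum A B hσ hα hg hc ht) ?_
  convert (s0.add s1).add s2 using 1
  ext ⟨k, m⟩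
  have eσ : ∀ k m : ℕ, w σ α (k + 1, m) + c = w σ α (k, m) + (c + σ) := by
    intro k m; simp only [w]; push_cast; ring
  have eα : ∀ k m : ℕ, w σ α (k, m + 1) + c = w σ α (k, m) + (c + α) := by
    intro k m; simp only [w]; push_cast; ring
  rcases k with _ | k <;> rcases m with _ | m
  · simp [term, Q, w]
  · simp [term, Q_zero_succ, eα]
  · simp [term, Q_succ_zero, eσ]
  · simp only [term, Q_succ_succ, Nat.add_eq_zero_iff, one_ne_zero, and_false, if_false,
      Prod.mk.injEq, add_tsub_cancel_right, zero_add, add_apply]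
    conv_rhs => rw [← eσ, ← eα]
    rfl

lemma F_eq_J (A B : Y →L[ℝ] Y) {σ α c : ℝ} (hσ : 0 < σ) (hα : σ ≤ α)
    {g : ℝ → Y} (hg : ContinuousOn g (Ici 0)) (hc : 0 < c) {t : ℝ} (ht : 0 ≤ t) :
    F A B σ α g c t = J c (fun s => g s + A (F A B σ α g σ s) + B (F A B σ α g α s)) t := by
  have hα0 : 0 < α := by linarith
  have cσ := F_cont A B hσ hα hg hσ
  have cα := F_cont A B hσ hα hg hα0
  rw [F_rec A B hσ hα hg hc ht, ← J_F A B hσ hα hg hσ hc ht, ← J_F A B hσ hα hg hα0 hc ht,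
    ← J_clm A hc cσ ht, ← J_clm B hc cα ht]
  have c1 := A.continuous.comp_continuousOn cσ
  have c2 := B.continuous.comp_continuousOn cα
  have e1 := J_add hc (hg.add c1) c2 ht
  have e2 := J_add hc hg c1 ht
  exact (e1.trans (congrArg (· + _) e2)).symm

lemma xb_eq (A B : Y →L[ℝ] Y) {σ α : ℝ} (hσ : 0 < σ) (hα : σ ≤ α)
    {g : ℝ → Y} (hg : ContinuousOn g (Ici 0)) (hα1 : 1 < α) {t : ℝ} (ht : 0 ≤ t) :
    ∫ s in (0:ℝ)..t, (∑' p : ℕ × ℕ, ((t - s) ^ (w σ α p + α - 1) /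
        Real.Gamma (w σ α p + α)) • (Q A B p.1 p.2) (g s)) = F A B σ α g α t := by
  obtain ⟨M, hM0, hM⟩ := exists_bound hg t
  have hs := (summable_main A B hσ hα (show 0 ≤ α - 1 by linarith) ht).mul_left M
  have hbd : ∀ (p : ℕ × ℕ) (s : ℝ), 0 < s → s ≤ t → ‖((t - s) ^ (w σ α p + α - 1) /
        Real.Gamma (w σ α p + α)) • (Q A B p.1 p.2) (g s)‖ ≤ M * (‖Q A B p.1 p.2‖ *
      (t ^ (w σ α p + (α - 1)) / Real.Gamma (w σ α p + (α - 1) + 1))) := by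
    intro p s h0 h1
    have hw := w_nonneg hσ hα p
    have hG := Real.Gamma_pos_of_pos (show 0 < w σ α p + α by linarith)
    rw [norm_smul, Real.norm_of_nonneg (kern_nonneg (by linarith) h1),
      show w σ α p + (α - 1) + 1 = w σ α p + α by ring,
      show w σ α p + (α - 1) = w σ α p + α - 1 by ring]
    calc _ ≤ (t ^ (w σ α p + α - 1) / Real.Gamma (w σ α p + α)) * (‖Q A B p.1 p.2‖ * M) := by
          refine mul_le_mul ?_ ?_ (norm_nonneg _) (by positivity)
          · gcongr
            · linarith
            · linarith
          · exact (ContinuousLinearMap.le_opNorm _ _).trans (by gcongr; exact hM s h0.le h1)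
      _ = _ := by ring
  have h : HasSum (fun p : ℕ × ℕ => ∫ s in (0:ℝ)..t, ((t - s) ^ (w σ α p + α - 1) /
        Real.Gamma (w σ α p + α)) • (Q A B p.1 p.2) (g s))
      (∫ s in (0:ℝ)..t, (∑' p : ℕ × ℕ, ((t - s) ^ (w σ α p + α - 1) /
        Real.Gamma (w σ α p + α)) • (Q A B p.1 p.2) (g s))) := by
    apply intervalIntegral.hasSum_integral_of_dominated_convergence
      (fun p s => M * (‖Q A B p.1 p.2‖ *
      (t ^ (w σ α p + (α - 1)) / Real.Gamma (w σ α p + (α - 1) + 1))))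
    · intro p
      have hw := w_nonneg hσ hα p
      exact (J_integrable (show 0 < w σ α p + α by linarith)
        ((Q A B p.1 p.2).continuous.comp_continuousOn hg) ht).def'.aestronglyMeasurable
    · intro p
      filter_upwards with s hs
      rw [uIoc_of_le ht] at hs
      exact hbd p s hs.1 hs.2
    · filter_upwards with s hs'
      exact hs
    · exact intervalIntegrable_const
    · filter_upwards with s hs'
      rw [uIoc_of_le ht] at hs'
      exact (Summable.of_norm_bounded hs (fun p => hbd p s hs'.1 hs'.2)).hasSum
  refine h.unique ?_
  convert F_hasSum A B hσ hα hg (show 0 < α by linarith) ht using 2 with p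
  have hw := w_nonneg hσ hα p
  exact J_clm (Q A B p.1 p.2) (show 0 < w σ α p + α by linarith) hg ht

end series

end MildSol

/-- The particular mild solution `x̄(t) = ∫₀ᵗ ∑_{k,m} Q_{k,m}^{A,B}
(t−s)^{k(α−β)+mα+α−1}/Γ(k(α−β)+mα+α) g(s) ds` satisfies `x̄(0) = 0`, `x̄'(0) = 0`, its
Riemann–Liouville derivatives of orders `α ∈ (1,2)` and `β ∈ (0,1)` exist for `t > 0`,
and `(ᴿᴸD^α x̄)(t) − A (ᴿᴸD^β x̄)(t) = B x̄(t) + g(t)`. -/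
theorem particular_mild_solution {Y : Type*} [NormedAddCommGroup Y] [NormedSpace ℝ Y]
    [CompleteSpace Y] (A B : Y →L[ℝ] Y) (α β : ℝ)
    (hα1 : 1 < α) (hα2 : α < 2) (hβ0 : 0 < β) (hβ1 : β < 1)
    (g : ℝ → Y) (hg : ContinuousOn g (Set.Ici 0)) (xb : ℝ → Y)
    (hxb : ∀ t : ℝ, 0 ≤ t → xb t = ∫ s in (0:ℝ)..t,
      (∑' p : ℕ × ℕ, (((t - s) ^ ((p.1 : ℝ) * (α - β) + (p.2 : ℝ) * α + α - 1)) /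
        Real.Gamma ((p.1 : ℝ) * (α - β) + (p.2 : ℝ) * α + α)) • (Q A B p.1 p.2) (g s))) :
    xb 0 = 0 ∧
    HasDerivWithinAt xb 0 (Set.Ici 0) 0 ∧
    ∃ Iα' Dα Dβ : ℝ → Y,
      (∀ t : ℝ, 0 < t → HasDerivWithinAt
        (fun τ => (Real.Gamma (2 - α))⁻¹ • ∫ s in (0:ℝ)..τ, ((τ - s) ^ (1 - α)) • xb s)
        (Iα' t) (Set.Ici 0) t) ∧
      (∀ t : ℝ, 0 < t → HasDerivWithinAt Iα' (Dα t) (Set.Ici 0) t) ∧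
      (∀ t : ℝ, 0 < t → HasDerivWithinAt
        (fun τ => (Real.Gamma (1 - β))⁻¹ • ∫ s in (0:ℝ)..τ, ((τ - s) ^ (-β)) • xb s)
        (Dβ t) (Set.Ici 0) t) ∧
      (∀ t : ℝ, 0 < t → Dα t - A (Dβ t) = B (xb t) + g t) := by
  have hσ : 0 < α - β := by linarith
  have hα : α - β ≤ α := by linarith
  have hα0 : 0 < α := by linarith
  have hx : ∀ t : ℝ, 0 ≤ t → xb t = MildSol.F A B (α - β) α g α t := by
    intro t ht
    rw [hxb t ht]
    exact MildSol.xb_eq A B hσ hα hg hα1 ht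
  have hFc : ∀ c : ℝ, 0 < c → ContinuousOn (MildSol.F A B (α - β) α g c) (Set.Ici 0) :=
    fun c hc => MildSol.F_cont A B hσ hα hg hc
  have hFd : ∀ c : ℝ, 0 < c → ∀ t : ℝ, 0 ≤ t →
      HasDerivWithinAt (MildSol.F A B (α - β) α g (1 + c)) (MildSol.F A B (α - β) α g c t)
        (Set.Ici 0) t := by
    intro c hc t ht
    refine (MildSol.J_deriv (hFc c hc) ht).congr_of_mem ?_ ht
    intro s hs
    exact (MildSol.J_F A B hσ hα hg hc one_pos hs).symm
  have hF0 : ∀ c : ℝ, MildSol.F A B (α - β) α g c 0 = 0 := by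
    intro c
    simp [MildSol.F, MildSol.term, MildSol.J_zero]
  have hJx : ∀ δ : ℝ, 0 < δ → ∀ t : ℝ, 0 ≤ t →
      (Real.Gamma δ)⁻¹ • ∫ s in (0:ℝ)..t, ((t - s) ^ (δ - 1)) • xb s =
        MildSol.F A B (α - β) α g (δ + α) t := by
    intro δ hδ t ht
    rw [← MildSol.J_F A B hσ hα hg hα0 hδ ht,
      ← MildSol.J_congr ht (fun s hs _ => hx s hs), MildSol.J, ← intervalIntegral.integral_smul]
    simp only [smul_smul, div_eq_inv_mul]
  refine ⟨by rw [hx 0 le_rfl, hF0], ?_, MildSol.F A B (α - β) α g 1,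
    fun s => g s + A (MildSol.F A B (α - β) α g (α - β) s) + B (MildSol.F A B (α - β) α g α s),
    MildSol.F A B (α - β) α g (α - β), ?_, ?_, ?_, ?_⟩
  · have h := hFd (α - 1) (by linarith) 0 le_rfl
    rw [hF0, add_sub_cancel] at h
    exact h.congr_of_mem (fun s hs => hx s hs) Set.self_mem_Ici
  · intro t ht
    refine (hFd 1 one_pos t ht.le).congr_of_mem ?_ ht.le
    intro s hs
    have := hJx (2 - α) (by linarith) s hs
    rw [show 2 - α - 1 = 1 - α by ring, show 2 - α + α = 1 + 1 by ring] at this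
    exact this
  · intro t ht
    have hv : ContinuousOn (fun s => g s + A (MildSol.F A B (α - β) α g (α - β) s) +
        B (MildSol.F A B (α - β) α g α s)) (Set.Ici 0) :=
      (hg.add (A.continuous.comp_continuousOn (hFc _ hσ))).add
        (B.continuous.comp_continuousOn (hFc _ hα0))
    refine (MildSol.J_deriv hv ht.le).congr_of_mem ?_ ht.le
    intro s hs
    exact MildSol.F_eq_J A B hσ hα hg one_pos hs
  · intro t ht
    refine (hFd (α - β) hσ t ht.le).congr_of_mem ?_ ht.le
    intro s hs
    have := hJx (1 - β) (by linarith) s hs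
    rw [show 1 - β - 1 = - β by ring, show 1 - β + α = 1 + (α - β) by ring] at this
    exact this
  · intro t ht
    rw [hx t ht.le]
    simp only
    abel
end
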